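/- arXiv:0906.1637 — 3 statements merged into one kernel-verified Lean document; each statement's English description precedes it below -/
import Mathlib

section
/- Let a > 1, Q ≥ 0 and 𝓘 > 0 be real parameters and let P(k,ω) be the scalar Linear/Gaussian/Bernoulli covariance process with arrival probability γ̄ ∈ (0,1) started at p₀ ≥ p∞. Then the sequence of expected square roots (E[√(P(k))])_{k∈ℕ} is bounded if and only if γ̄ > 1 − 1/a. -/
open MeasureTheory ProbabilityTheory

/-- Measurement-update map `g(p) = ((a²p + Q)⁻¹ + 𝓘)⁻¹`. -/
noncomputable def gMap (a Q I p : ℝ) : ℝ := ((a ^ 2 * p + Q)⁻¹ + I)⁻¹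

/-- Time-update map `h(p) = a²p + Q`. -/
def hMap (a Q p : ℝ) : ℝ := a ^ 2 * p + Q

/-- The scalar Linear/Gaussian/Bernoulli covariance process driven by the
arrival sequence `ω : ℕ → Bool`, started at `p₀`. -/
noncomputable def lgbProc (a Q I p₀ : ℝ) (ω : ℕ → Bool) : ℕ → ℝ
  | 0 => p₀
  | k + 1 =>
      if ω k then gMap a Q I (lgbProc a Q I p₀ ω k)
      else hMap a Q (lgbProc a Q I p₀ ω k)

lemma lgb_congr (a Q I p₀ : ℝ) (ω ω' : ℕ → Bool) (k : ℕ) (h : ∀ i < k, ω i = ω' i) :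
    lgbProc a Q I p₀ ω k = lgbProc a Q I p₀ ω' k := by
  induction k with
  | zero => rfl
  | succ k ih =>
    have := ih (fun i hi => h i (by omega))
    simp only [lgbProc, this, h k (by omega)]

noncomputable def lgbExt (k : ℕ) (x : Finset.range k → Bool) : ℕ → Bool :=
  fun i => if h : i ∈ Finset.range k then x ⟨i, h⟩ else false

lemma lgb_factor (a Q I p₀ : ℝ) (ω : ℕ → Bool) (k : ℕ) :
    lgbProc a Q I p₀ ω k =
      lgbProc a Q I p₀ (lgbExt k (fun i : Finset.range k => ω i)) k := by
  apply lgb_congr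
  intro i hi
  simp [lgbExt, hi]

lemma lgb_meas {β : Type*} [MeasurableSpace β] (a Q I p₀ : ℝ) (k : ℕ) (f : ℝ → β) :
    Measurable (fun ω : ℕ → Bool => f (lgbProc a Q I p₀ ω k)) := by
  have h1 : Measurable (fun x : Finset.range k → Bool => f (lgbProc a Q I p₀ (lgbExt k x) k)) :=
    measurable_of_finite _
  have h2 : Measurable (fun (ω : ℕ → Bool) (i : Finset.range k) => ω i) := by fun_prop
  have := h1.comp h2
  convert this using 2 with ω
  simp only [Function.comp]
  rw [lgb_factor]

lemma lgb_prod (a Q I p₀ : ℝ) (μ : Measure (ℕ → Bool))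
    (hIndep : iIndepFun (fun (k : ℕ) (ω : ℕ → Bool) => ω k) μ) (k : ℕ)
    (f : ℝ → ENNReal) (g : Bool → ENNReal) :
    ∫⁻ ω, f (lgbProc a Q I p₀ ω k) * g (ω k) ∂μ =
      (∫⁻ ω, f (lgbProc a Q I p₀ ω k) ∂μ) * ∫⁻ ω, g (ω k) ∂μ := by
  have h0 := hIndep.indepFun_finset (Finset.range k) {k} (by simp) (fun i => by fun_prop)
  have h1 : Measurable (fun x : Finset.range k → Bool => f (lgbProc a Q I p₀ (lgbExt k x) k)) :=
    measurable_of_finite _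
  have h2 : Measurable (fun x : ({k} : Finset ℕ) → Bool => g (x ⟨k, by simp⟩)) :=
    measurable_of_finite _
  have h3 := h0.comp h1 h2
  have h4 : (fun ω : ℕ → Bool => f (lgbProc a Q I p₀ ω k)) =
      (fun x : Finset.range k → Bool => f (lgbProc a Q I p₀ (lgbExt k x) k)) ∘
        (fun (ω : ℕ → Bool) (i : Finset.range k) => ω i) := by
    funext ω
    simp only [Function.comp]
    rw [lgb_factor]
  have h5 : IndepFun (fun ω : ℕ → Bool => f (lgbProc a Q I p₀ ω k)) (fun ω => g (ω k)) μ := by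
    rw [h4]; exact h3
  exact lintegral_mul_eq_lintegral_mul_lintegral_of_indepFun (lgb_meas a Q I p₀ k f)
    ((measurable_of_finite g).comp (measurable_pi_apply k)) h5

lemma lgb_step (a Q I p₀ γ : ℝ) (hγ : γ ∈ Set.Ioo (0 : ℝ) 1)
    (μ : Measure (ℕ → Bool)) [IsProbabilityMeasure μ]
    (hBern : ∀ k : ℕ, μ {ω : ℕ → Bool | ω k = true} = ENNReal.ofReal γ)
    (hIndep : iIndepFun (fun (k : ℕ) (ω : ℕ → Bool) => ω k) μ) (k : ℕ) (f : ℝ → ENNReal) :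
    ∫⁻ ω, f (lgbProc a Q I p₀ ω (k+1)) ∂μ =
      (∫⁻ ω, f (gMap a Q I (lgbProc a Q I p₀ ω k)) ∂μ) * ENNReal.ofReal γ +
      (∫⁻ ω, f (hMap a Q (lgbProc a Q I p₀ ω k)) ∂μ) * ENNReal.ofReal (1 - γ) := by
  have hm : MeasurableSet {ω : ℕ → Bool | ω k = true} :=
    measurableSet_eq_fun (measurable_pi_apply k) measurable_const
  have e1 : ∫⁻ ω : ℕ → Bool, (if ω k = true then 1 else 0 : ENNReal) ∂μ = ENNReal.ofReal γ := by
    rw [← hBern k, ← lintegral_indicator_one hm]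
    congr 1
    funext ω
    by_cases h : ω k = true <;> simp [h]
  have e2 : ∫⁻ ω : ℕ → Bool, (if ω k = true then 0 else 1 : ENNReal) ∂μ
      = ENNReal.ofReal (1 - γ) := by
    rw [ENNReal.ofReal_sub _ hγ.1.le, ← hBern k, ENNReal.ofReal_one, ← prob_compl_eq_one_sub hm,
      ← lintegral_indicator_one hm.compl]
    congr 1
    funext ω
    by_cases h : ω k = true <;> simp [h]
  have m1 := lgb_prod a Q I p₀ μ hIndep k (fun p => f (gMap a Q I p)) (fun b => if b = true then 1 else 0)
  have m2 := lgb_prod a Q I p₀ μ hIndep k (fun p => f (hMap a Q p)) (fun b => if b = true then 0 else 1)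
  simp only [e1, e2] at m1 m2
  rw [← m1, ← m2, ← lintegral_add_left]
  · congr 1
    funext ω
    by_cases h : ω k = true <;> simp [h, lgbProc]
  · exact (lgb_meas a Q I p₀ k (fun p => f (gMap a Q I p))).mul
      ((measurable_of_finite (fun b : Bool => if b = true then (1 : ENNReal) else 0)).comp
        (measurable_pi_apply k))

lemma gMap_mono (a Q I p q : ℝ) (ha : 1 < a) (hQ : 0 ≤ Q) (hI : 0 < I) (hp : 0 < p)
    (hpq : p ≤ q) : gMap a Q I p ≤ gMap a Q I q := by
  have hq : 0 < q := hp.trans_le hpq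
  have h1 : 0 < a ^ 2 * p + Q := by positivity
  have h2 : 0 < a ^ 2 * q + Q := by positivity
  unfold gMap
  gcongr

lemma lgb_ge (a Q I pinf p₀ : ℝ)
    (ha : 1 < a) (hQ : 0 ≤ Q) (hI : 0 < I)
    (hpinf : 0 < pinf) (hfix : gMap a Q I pinf = pinf) (hp₀ : pinf ≤ p₀) (ω : ℕ → Bool) (k : ℕ) :
    pinf ≤ lgbProc a Q I p₀ ω k := by
  induction k with
  | zero => exact hp₀
  | succ k ih =>
    simp only [lgbProc]
    split_ifs
    · exact hfix.symm.le.trans (gMap_mono a Q I _ _ ha hQ hI hpinf ih)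
    · unfold hMap
      have h1 : 1 ≤ a ^ 2 := one_le_pow₀ ha.le
      nlinarith [mul_nonneg (sub_nonneg.2 h1) (hpinf.le.trans ih)]



/-- For `a > 1`, `Q ≥ 0`, `𝓘 > 0`, the sequence of expected
square roots `(E[√(P(k))])ₖ` of the scalar LGB covariance process with Bernoulli(γ̄)
arrivals, started at `p₀ ≥ p∞`, is bounded iff `γ̄ > 1 - 1/a`. -/
theorem lgb_expected_stddev_bounded_iff
    (a Q I pinf p₀ γ : ℝ)
    (ha : 1 < a) (hQ : 0 ≤ Q) (hI : 0 < I)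
    (hpinf : 0 < pinf) (hfix : gMap a Q I pinf = pinf) (hp₀ : pinf ≤ p₀)
    (hγ : γ ∈ Set.Ioo (0 : ℝ) 1)
    (μ : Measure (ℕ → Bool)) [IsProbabilityMeasure μ]
    (hBern : ∀ k : ℕ, μ {ω : ℕ → Bool | ω k = true} = ENNReal.ofReal γ)
    (hIndep : iIndepFun
      (fun (k : ℕ) (ω : ℕ → Bool) => ω k) μ) :
    (∃ C : ℝ, ∀ k : ℕ,
        ∫⁻ ω, ENNReal.ofReal (Real.sqrt (lgbProc a Q I p₀ ω k)) ∂μ ≤ ENNReal.ofReal C)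
      ↔ 1 - 1 / a < γ := by
  obtain ⟨hγ0, hγ1⟩ := hγ
  have ha0 : 0 < a := by linarith
  have hge := lgb_ge a Q I pinf p₀ ha hQ hI hpinf hfix hp₀
  have step := fun k => lgb_step a Q I p₀ γ ⟨hγ0, hγ1⟩ μ hBern hIndep k
    (fun p => ENNReal.ofReal (Real.sqrt p))
  have hsq : ∀ p, 0 ≤ p → Real.sqrt (a ^ 2 * p) = a * Real.sqrt p := by
    intro p hp
    rw [Real.sqrt_mul (by positivity), Real.sqrt_sq ha0.le]
  constructor
  · rintro ⟨C, hC⟩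
    by_contra hcon
    have hr : 1 ≤ a * (1 - γ) := by
      have h1 : γ ≤ 1 - 1 / a := not_lt.mp hcon
      have h2 : a * (1 / a) = 1 := by field_simp
      nlinarith
    set c := Real.sqrt pinf * γ with hc
    have hc0 : 0 < c := mul_pos (Real.sqrt_pos.2 hpinf) hγ0
    have key : ∀ k : ℕ, ENNReal.ofReal (k * c) ≤
        ∫⁻ ω, ENNReal.ofReal (Real.sqrt (lgbProc a Q I p₀ ω k)) ∂μ := by
      intro k
      induction k with
      | zero => simp
      | succ k ih =>
        rw [step k]
        have l1 : ENNReal.ofReal (Real.sqrt pinf) ≤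
            ∫⁻ ω, ENNReal.ofReal (Real.sqrt (gMap a Q I (lgbProc a Q I p₀ ω k))) ∂μ := by
          calc ENNReal.ofReal (Real.sqrt pinf)
              = ∫⁻ _ω, ENNReal.ofReal (Real.sqrt pinf) ∂μ := by simp
            _ ≤ _ := by
              apply lintegral_mono
              intro ω
              apply ENNReal.ofReal_le_ofReal
              apply Real.sqrt_le_sqrt
              exact hfix.symm.le.trans (gMap_mono a Q I _ _ ha hQ hI hpinf (hge ω k))
        have l2 : ENNReal.ofReal a *
            ∫⁻ ω, ENNReal.ofReal (Real.sqrt (lgbProc a Q I p₀ ω k)) ∂μ ≤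
            ∫⁻ ω, ENNReal.ofReal (Real.sqrt (hMap a Q (lgbProc a Q I p₀ ω k))) ∂μ := by
          rw [← lintegral_const_mul _ (lgb_meas a Q I p₀ k
            (fun p => ENNReal.ofReal (Real.sqrt p)))]
          apply lintegral_mono
          intro ω
          simp only
          rw [← ENNReal.ofReal_mul ha0.le]
          apply ENNReal.ofReal_le_ofReal
          rw [← hsq _ (hpinf.le.trans (hge ω k))]
          apply Real.sqrt_le_sqrt
          unfold hMap
          linarith
        calc ENNReal.ofReal ((k + 1 : ℕ) * c)
            ≤ ENNReal.ofReal (Real.sqrt pinf * γ + a * (k * c) * (1 - γ)) := by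
              apply ENNReal.ofReal_le_ofReal
              push_cast
              have : 0 ≤ (k : ℝ) * c := by positivity
              nlinarith
          _ = ENNReal.ofReal (Real.sqrt pinf) * ENNReal.ofReal γ +
              ENNReal.ofReal a * ENNReal.ofReal (k * c) * ENNReal.ofReal (1 - γ) := by
              have h1g : 0 ≤ 1 - γ := by linarith
              rw [ENNReal.ofReal_add (by positivity) (by positivity),
                ENNReal.ofReal_mul (by positivity), ENNReal.ofReal_mul (by positivity),
                ENNReal.ofReal_mul (by positivity)]
          _ ≤ _ := by
              refine add_le_add (mul_le_mul_left l1 _) (mul_le_mul_left ?_ _)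
              exact (mul_le_mul_right ih _).trans l2
    obtain ⟨n, hn⟩ := exists_nat_gt (|C| / c)
    have h1 := (key n).trans (hC n)
    have h2 : |C| < n * c := (div_lt_iff₀ hc0).1 hn
    have h3 : 0 < n * c := (abs_nonneg C).trans_lt h2
    have h4 := (h1.trans (ENNReal.ofReal_le_ofReal (le_abs_self C)))
    rw [ENNReal.ofReal_le_ofReal_iff (abs_nonneg C)] at h4
    linarith
  · intro hlt
    have hr : a * (1 - γ) < 1 := by
      have h2 : a * (1 / a) = 1 := by field_simp
      nlinarith
    set r := a * (1 - γ) with hrd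
    set b := Real.sqrt I⁻¹ * γ + Real.sqrt Q * (1 - γ) with hb
    have h1g : 0 ≤ 1 - γ := by linarith
    have hb0 : 0 ≤ b := by positivity
    set C := max (Real.sqrt p₀) (b / (1 - r)) with hCd
    have hC0 : 0 ≤ C := le_max_of_le_left (Real.sqrt_nonneg _)
    have hCb : r * C + b ≤ C := by
      have : b / (1 - r) ≤ C := le_max_right _ _
      rw [div_le_iff₀ (by linarith)] at this
      linarith
    refine ⟨C, fun k => ?_⟩
    induction k with
    | zero =>
      simp only [lgbProc, lintegral_const, measure_univ, mul_one]
      exact ENNReal.ofReal_le_ofReal (le_max_left _ _)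
    | succ k ih =>
      rw [step k]
      have l1 : ∫⁻ ω, ENNReal.ofReal (Real.sqrt (gMap a Q I (lgbProc a Q I p₀ ω k))) ∂μ ≤
          ENNReal.ofReal (Real.sqrt I⁻¹) := by
        calc _ ≤ ∫⁻ _ω, ENNReal.ofReal (Real.sqrt I⁻¹) ∂μ := by
              apply lintegral_mono
              intro ω
              apply ENNReal.ofReal_le_ofReal
              apply Real.sqrt_le_sqrt
              have hp := hpinf.trans_le (hge ω k)
              unfold gMap
              apply inv_anti₀ hI
              have : 0 ≤ (a ^ 2 * lgbProc a Q I p₀ ω k + Q)⁻¹ := by positivity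
              linarith
          _ = _ := by simp
      have l2 : ∫⁻ ω, ENNReal.ofReal (Real.sqrt (hMap a Q (lgbProc a Q I p₀ ω k))) ∂μ ≤
          ENNReal.ofReal a * ENNReal.ofReal C + ENNReal.ofReal (Real.sqrt Q) := by
        calc _ ≤ ∫⁻ ω, (ENNReal.ofReal a * ENNReal.ofReal (Real.sqrt (lgbProc a Q I p₀ ω k))
                + ENNReal.ofReal (Real.sqrt Q)) ∂μ := by
              apply lintegral_mono
              intro ω
              simp only
              rw [← ENNReal.ofReal_mul ha0.le, ← ENNReal.ofReal_add (by positivity) (by positivity)]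
              apply ENNReal.ofReal_le_ofReal
              have hp := hpinf.trans_le (hge ω k)
              rw [← hsq _ hp.le]
              unfold hMap
              have hp2 : 0 ≤ a ^ 2 * lgbProc a Q I p₀ ω k := by positivity
              rw [Real.sqrt_le_left (by positivity)]
              nlinarith [Real.sq_sqrt hp2, Real.sq_sqrt hQ,
                mul_nonneg (Real.sqrt_nonneg (a ^ 2 * lgbProc a Q I p₀ ω k)) (Real.sqrt_nonneg Q)]
          _ = ENNReal.ofReal a * ∫⁻ ω, ENNReal.ofReal (Real.sqrt (lgbProc a Q I p₀ ω k)) ∂μ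
                + ENNReal.ofReal (Real.sqrt Q) := by
              rw [lintegral_add_right _ measurable_const, lintegral_const_mul _
                (lgb_meas a Q I p₀ k (fun p => ENNReal.ofReal (Real.sqrt p)))]
              simp
          _ ≤ _ := add_le_add (mul_le_mul_right ih _) le_rfl
      calc _ ≤ ENNReal.ofReal (Real.sqrt I⁻¹) * ENNReal.ofReal γ +
            (ENNReal.ofReal a * ENNReal.ofReal C + ENNReal.ofReal (Real.sqrt Q))
              * ENNReal.ofReal (1 - γ) :=
            add_le_add (mul_le_mul_left l1 _) (mul_le_mul_left l2 _)
        _ = ENNReal.ofReal (Real.sqrt I⁻¹ * γ + (a * C + Real.sqrt Q) * (1 - γ)) := by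
            rw [ENNReal.ofReal_add (by positivity) (by positivity),
              ENNReal.ofReal_mul (by positivity), ENNReal.ofReal_mul (by positivity),
              ENNReal.ofReal_add (by positivity) (by positivity),
              ENNReal.ofReal_mul (by positivity)]
        _ ≤ _ := by
            apply ENNReal.ofReal_le_ofReal
            refine le_trans (le_of_eq ?_) hCb
            rw [hrd, hb]; ring
end

section
/- If P∞ is a positive definite symmetric fixed point of g (g(P∞) = P∞), then the set {P : P ≥ P∞} is invariant under both Riccati maps: for every positive definite symmetric P with P ≥ P∞ one has g(P) ≥ P∞ and h(P) ≥ P∞. -/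
open Matrix

/-- Time-update Riccati map `h(P) = A P Aᵀ + Q`. -/
def riccatiH {n : ℕ} (A Q P : Matrix (Fin n) (Fin n) ℝ) :
    Matrix (Fin n) (Fin n) ℝ := A * P * Aᵀ + Q

/-- Measurement-update Riccati map `g(P) = ((A P Aᵀ + Q)⁻¹ + 𝓘)⁻¹`. -/
noncomputable def riccatiG {n : ℕ} (A Q I P : Matrix (Fin n) (Fin n) ℝ) :
    Matrix (Fin n) (Fin n) ℝ := ((A * P * Aᵀ + Q)⁻¹ + I)⁻¹

theorem psd_inv_sub_inv {n : ℕ} {X Y : Matrix (Fin n) (Fin n) ℝ} (hX : X.PosDef)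
    (hY : Y.PosDef) (h : (Y - X).PosSemidef) : (X⁻¹ - Y⁻¹).PosSemidef := by
  have uX : IsUnit X.det := (Matrix.isUnit_iff_isUnit_det _).1 hX.isUnit
  have uY : IsUnit Y.det := (Matrix.isUnit_iff_isUnit_det _).1 hY.isUnit
  have h1 : ((Y - X) + (Y - X) * X⁻¹ * (Y - X)ᴴ).PosSemidef :=
    h.add (hX.inv.posSemidef.mul_mul_conjTranspose_same (Y - X))
  have h2 := h1.mul_mul_conjTranspose_same Y⁻¹
  rw [h.1.eq, hY.inv.1.eq] at h2
  have e1 : (Y - X) + (Y - X) * X⁻¹ * (Y - X) = Y * X⁻¹ * Y - Y := by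
    simp only [sub_mul, mul_sub, Matrix.mul_nonsing_inv _ uX, one_mul, Matrix.mul_assoc,
      Matrix.nonsing_inv_mul _ uX, mul_one]
    abel
  have e2 : Y⁻¹ * (Y * X⁻¹ * Y - Y) * Y⁻¹ = X⁻¹ - Y⁻¹ := by
    rw [mul_sub, sub_mul, Matrix.nonsing_inv_mul _ uY, one_mul, Matrix.mul_assoc Y,
      Matrix.nonsing_inv_mul_cancel_left _ _ uY, Matrix.mul_nonsing_inv_cancel_right _ _ uY]
  rwa [e1, e2] at h2

theorem posDef_riccatiH {n : ℕ} {A Q P : Matrix (Fin n) (Fin n) ℝ} (hA : IsUnit A.det)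
    (hQ : Q.PosSemidef) (hP : P.PosDef) : (A * P * Aᵀ + Q).PosDef := by
  refine Matrix.PosDef.add_posSemidef ?_ hQ
  have hu : IsUnit A := (Matrix.isUnit_iff_isUnit_det _).2 hA
  have := hP.mul_mul_conjTranspose_same (B := A) (Matrix.vecMul_injective_of_isUnit hu)
  rwa [Matrix.conjTranspose_eq_transpose_of_trivial] at this

/-- If `P∞` is a positive definite fixed point of `g`, then
the set `{P : P ≥ P∞}` is invariant under both Riccati maps. -/
theorem riccati_upper_set_invariant
    {n : ℕ} (hn : 1 ≤ n) (A Q I Pinf : Matrix (Fin n) (Fin n) ℝ)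
    (hA : IsUnit A.det) (hQ : Q.PosSemidef) (hI : I.PosSemidef)
    (hPinf : Pinf.PosDef) (hfix : riccatiG A Q I Pinf = Pinf) :
    ∀ P : Matrix (Fin n) (Fin n) ℝ, P.PosDef → (P - Pinf).PosSemidef →
      (riccatiG A Q I P - Pinf).PosSemidef ∧
      (riccatiH A Q P - Pinf).PosSemidef := by
  intro P hP hle
  have H := posDef_riccatiH hA hQ hP
  have H0 := posDef_riccatiH hA hQ hPinf
  have d : ((A * P * Aᵀ + Q) - (A * Pinf * Aᵀ + Q)).PosSemidef := by
    have := hle.mul_mul_conjTranspose_same A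
    rw [Matrix.conjTranspose_eq_transpose_of_trivial] at this
    rwa [add_sub_add_right_eq_sub, ← sub_mul, ← mul_sub]
  have G := H.inv.add_posSemidef hI
  have G0 := H0.inv.add_posSemidef hI
  have g1 : (riccatiG A Q I P - Pinf).PosSemidef := by
    suffices h : (riccatiG A Q I P - riccatiG A Q I Pinf).PosSemidef by rwa [hfix] at h
    unfold riccatiG
    refine psd_inv_sub_inv G G0 ?_
    rw [add_sub_add_right_eq_sub]
    exact psd_inv_sub_inv H0 H d
  refine ⟨g1, ?_⟩
  have g2 : (riccatiH A Q P - riccatiG A Q I P).PosSemidef := by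
    have := psd_inv_sub_inv H.inv G (by rwa [add_sub_cancel_left])
    rwa [Matrix.nonsing_inv_nonsing_inv _ ((Matrix.isUnit_iff_isUnit_det _).1 H.isUnit)] at this
  simpa using g2.add g1
end

section
/- The measurement-update map g is nonexpansive for the natural (Fisher/affine-invariant) distance: for every invertible real n×n matrix A and real n×n positive semidefinite symmetric matrices Q and 𝓘, and all real n×n positive definite symmetric matrices P₁, P₂, one has d(((A P₁ Aᵀ + Q)⁻¹ + 𝓘)⁻¹, ((A P₂ Aᵀ + Q)⁻¹ + 𝓘)⁻¹) ≤ d(P₁, P₂). -/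
open Matrix

noncomputable def matEigs {n : ℕ} (M : Matrix (Fin n) (Fin n) ℝ) : Fin n → ℝ := by
  classical exact if h : M.IsHermitian then h.eigenvalues else 0

/-- The positive semidefinite square root of a positive semidefinite matrix
(the former Mathlib definition, for real matrices). -/
noncomputable def Matrix.PosSemidef.sqrt {n : Type*} [Fintype n] [DecidableEq n]
    {A : Matrix n n ℝ} (hA : A.PosSemidef) : Matrix n n ℝ :=
  hA.1.eigenvectorUnitary.1 * diagonal (Real.sqrt ∘ hA.1.eigenvalues) *
    (star hA.1.eigenvectorUnitary : Matrix n n ℝ)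

noncomputable def matSqrt {n : ℕ} (M : Matrix (Fin n) (Fin n) ℝ) :
    Matrix (Fin n) (Fin n) ℝ := by
  classical exact if h : M.PosSemidef then h.sqrt else 0

/-- The natural (Fisher / affine-invariant) distance on positive definite
matrices: `d(P₁,P₂) = (∑ᵢ (log λᵢ)²)^{1/2}` where `λᵢ` are the eigenvalues of
`P₂^{-1/2} P₁ P₂^{-1/2}`. -/
noncomputable def natDist {n : ℕ} (P₁ P₂ : Matrix (Fin n) (Fin n) ℝ) : ℝ :=
  Real.sqrt (∑ i : Fin n,
    Real.log (matEigs ((matSqrt P₂)⁻¹ * P₁ * (matSqrt P₂)⁻¹) i) ^ 2)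

theorem matSqrt_props {n : ℕ} {P : Matrix (Fin n) (Fin n) ℝ} (h : P.PosDef) :
    (matSqrt P)ᵀ = matSqrt P ∧ matSqrt P * matSqrt P = P ∧ IsUnit (matSqrt P).det := by
  have hP := h.posSemidef
  have e : matSqrt P = hP.sqrt := by
    unfold matSqrt
    rw [dif_pos hP]
  have hU : (star hP.1.eigenvectorUnitary : Matrix (Fin n) (Fin n) ℝ) *
      hP.1.eigenvectorUnitary.1 = 1 := Unitary.coe_star_mul_self _
  have hs := hP.1.spectral_theorem
  rw [Unitary.conjStarAlgAut_apply] at hs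
  have h2 : matSqrt P * matSqrt P = P := by
    rw [e]
    unfold Matrix.PosSemidef.sqrt
    conv_rhs => rw [hs]
    have : (diagonal (Real.sqrt ∘ hP.1.eigenvalues)) * (diagonal (Real.sqrt ∘ hP.1.eigenvalues))
        = diagonal (RCLike.ofReal ∘ hP.1.eigenvalues : Fin n → ℝ) := by
      rw [diagonal_mul_diagonal]
      congr 1
      funext i
      simp [Real.mul_self_sqrt (hP.eigenvalues_nonneg i)]
    rw [← this]
    simp only [Matrix.mul_assoc]
    rw [← Matrix.mul_assoc (star hP.1.eigenvectorUnitary : Matrix (Fin n) (Fin n) ℝ)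
      hP.1.eigenvectorUnitary.1, hU, Matrix.one_mul]
  refine ⟨?_, h2, ?_⟩
  · rw [e]
    unfold Matrix.PosSemidef.sqrt
    rw [← conjTranspose_eq_transpose_of_trivial]
    simp [Matrix.mul_assoc, star_eq_conjTranspose]
  · have hd : IsUnit P.det := (Matrix.isUnit_iff_isUnit_det _).1 h.isUnit
    rw [← h2, det_mul] at hd
    exact isUnit_of_mul_isUnit_left hd

theorem pencilMat_posDef {n : ℕ} {P₁ P₂ : Matrix (Fin n) (Fin n) ℝ} (h₁ : P₁.PosDef)
    (h₂ : P₂.PosDef) : ((matSqrt P₂)⁻¹ * P₁ * (matSqrt P₂)⁻¹).PosDef := by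
  obtain ⟨ht, -, hu⟩ := matSqrt_props h₂
  have hu' : IsUnit (matSqrt P₂)⁻¹ := by
    rw [Matrix.isUnit_iff_isUnit_det]
    exact Matrix.isUnit_nonsing_inv_det _ hu
  have := (Matrix.IsUnit.posDef_star_left_conjugate_iff (x := P₁) hu').2 h₁
  rwa [star_eq_conjTranspose, conjTranspose_eq_transpose_of_trivial, transpose_nonsing_inv, ht]
    at this

theorem natDist_eq {n : ℕ} {P₁ P₂ : Matrix (Fin n) (Fin n) ℝ} (h₁ : P₁.PosDef)
    (h₂ : P₂.PosDef) : natDist P₁ P₂ =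
      Real.sqrt (((P₁ * P₂⁻¹).charpoly.roots.map (fun x => Real.log x ^ 2)).sum) := by
  have hM := pencilMat_posDef h₁ h₂
  obtain ⟨ht, h2, hu⟩ := matSqrt_props h₂
  have hc : (P₁ * P₂⁻¹).charpoly = ((matSqrt P₂)⁻¹ * P₁ * (matSqrt P₂)⁻¹).charpoly := by
    rw [Matrix.mul_assoc (matSqrt P₂)⁻¹, charpoly_mul_comm (matSqrt P₂)⁻¹, Matrix.mul_assoc,
      ← Matrix.mul_inv_rev, h2]
  rw [hc, hM.1.roots_charpoly_eq_eigenvalues]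
  unfold natDist matEigs
  rw [dif_pos hM.1, Multiset.map_map]
  rfl

theorem natDist_inv {n : ℕ} {P₁ P₂ : Matrix (Fin n) (Fin n) ℝ} (h₁ : P₁.PosDef)
    (h₂ : P₂.PosDef) : natDist P₁⁻¹ P₂⁻¹ = natDist P₂ P₁ := by
  have hd : IsUnit P₂.det := (Matrix.isUnit_iff_isUnit_det _).1 h₂.isUnit
  rw [natDist_eq h₁.inv h₂.inv, natDist_eq h₂ h₁, charpoly_mul_comm,
    Matrix.nonsing_inv_nonsing_inv _ hd]

theorem congr_posDef {n : ℕ} {A P : Matrix (Fin n) (Fin n) ℝ} (hA : IsUnit A.det)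
    (h : P.PosDef) : (A * P * Aᵀ).PosDef := by
  have := (Matrix.IsUnit.posDef_star_right_conjugate_iff (x := P)
    ((Matrix.isUnit_iff_isUnit_det _).2 hA)).2 h
  rwa [star_eq_conjTranspose, conjTranspose_eq_transpose_of_trivial] at this

theorem natDist_congr {n : ℕ} {A P₁ P₂ : Matrix (Fin n) (Fin n) ℝ} (hA : IsUnit A.det)
    (h₁ : P₁.PosDef) (h₂ : P₂.PosDef) :
    natDist (A * P₁ * Aᵀ) (A * P₂ * Aᵀ) = natDist P₁ P₂ := by
  rw [natDist_eq (congr_posDef hA h₁) (congr_posDef hA h₂), natDist_eq h₁ h₂]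
  have hA' : IsUnit Aᵀ.det := by rwa [det_transpose]
  have : A * P₁ * Aᵀ * (A * P₂ * Aᵀ)⁻¹ = A * (P₁ * P₂⁻¹ * A⁻¹) := by
    rw [Matrix.mul_inv_rev, Matrix.mul_inv_rev]
    simp only [Matrix.mul_assoc]
    rw [← Matrix.mul_assoc Aᵀ, Matrix.mul_nonsing_inv _ hA', Matrix.one_mul]
  rw [this, charpoly_mul_comm, Matrix.mul_assoc, Matrix.nonsing_inv_mul _ hA, Matrix.mul_one]

/-- The common ordering of the eigenvalue index. -/
noncomputable def eigRank {n : ℕ} (i : Fin n) : ℤ :=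
  (((Fintype.equivOfCardEq (Fintype.card_fin (Fintype.card (Fin n)))).symm i : ℕ) : ℤ)

theorem pencil_diag {n : ℕ} {P₁ P₂ : Matrix (Fin n) (Fin n) ℝ} (h₁ : P₁.PosDef)
    (h₂ : P₂.PosDef) : ∃ V : Matrix (Fin n) (Fin n) ℝ, IsUnit V.det ∧
      Vᵀ * P₁ * V = diagonal (matEigs ((matSqrt P₂)⁻¹ * P₁ * (matSqrt P₂)⁻¹)) ∧
      Vᵀ * P₂ * V = 1 ∧
      (∀ i, 0 < matEigs ((matSqrt P₂)⁻¹ * P₁ * (matSqrt P₂)⁻¹) i) ∧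
      (∀ i j, eigRank i ≤ eigRank j → matEigs ((matSqrt P₂)⁻¹ * P₁ * (matSqrt P₂)⁻¹) j ≤
        matEigs ((matSqrt P₂)⁻¹ * P₁ * (matSqrt P₂)⁻¹) i) := by
  have hM := pencilMat_posDef h₁ h₂
  obtain ⟨ht, h2, hu⟩ := matSqrt_props h₂
  have e : matEigs ((matSqrt P₂)⁻¹ * P₁ * (matSqrt P₂)⁻¹) = hM.1.eigenvalues := by
    unfold matEigs
    rw [dif_pos hM.1]
  rw [e]
  have hs := hM.1.conjStarAlgAut_star_eigenvectorUnitary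
  rw [Unitary.conjStarAlgAut_star_apply] at hs
  set U : Matrix (Fin n) (Fin n) ℝ := hM.1.eigenvectorUnitary.1 with hUdef
  have hU : Uᵀ * U = 1 := by
    rw [← conjTranspose_eq_transpose_of_trivial, ← star_eq_conjTranspose]
    exact Unitary.coe_star_mul_self hM.1.eigenvectorUnitary
  have hsU : star U = Uᵀ := by
    rw [star_eq_conjTranspose, conjTranspose_eq_transpose_of_trivial]
  have hst : ((matSqrt P₂)⁻¹)ᵀ = (matSqrt P₂)⁻¹ := by rw [transpose_nonsing_inv, ht]
  refine ⟨(matSqrt P₂)⁻¹ * U, ?_, ?_, ?_, hM.eigenvalues_pos, ?_⟩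
  · rw [det_mul]
    refine (Matrix.isUnit_nonsing_inv_det _ hu).mul ?_
    have := congrArg det hU
    rw [det_mul, det_one] at this
    exact IsUnit.of_mul_eq_one_right _ this
  · rw [transpose_mul, hst]
    change star U * _ * U = _ at hs
    rw [hsU] at hs
    rw [← Matrix.mul_assoc, Matrix.mul_assoc Uᵀ, Matrix.mul_assoc Uᵀ, hs]
    rfl
  · rw [transpose_mul, hst]
    have : (matSqrt P₂)⁻¹ * P₂ * (matSqrt P₂)⁻¹ = 1 := by
      have h3 : (matSqrt P₂)⁻¹ * P₂ = (matSqrt P₂)⁻¹ * (matSqrt P₂ * matSqrt P₂) := by rw [h2]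
      rw [h3, ← Matrix.mul_assoc, Matrix.nonsing_inv_mul _ hu, Matrix.one_mul,
        Matrix.mul_nonsing_inv _ hu]
    rw [← Matrix.mul_assoc, Matrix.mul_assoc Uᵀ, Matrix.mul_assoc Uᵀ, this, Matrix.mul_one, hU]
  · intro i j hij
    unfold Matrix.IsHermitian.eigenvalues
    apply hM.1.eigenvalues₀_antitone
    unfold eigRank at hij
    exact Fin.le_def.2 (by exact_mod_cast hij)

theorem quad_diag {n : ℕ} {P V : Matrix (Fin n) (Fin n) ℝ} {l : Fin n → ℝ}
    (h : Vᵀ * P * V = diagonal l) (y : Fin n → ℝ) :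
    (V *ᵥ y) ⬝ᵥ (P *ᵥ (V *ᵥ y)) = ∑ i, l i * y i ^ 2 := by
  have : (V *ᵥ y) ⬝ᵥ (P *ᵥ (V *ᵥ y)) = y ⬝ᵥ ((Vᵀ * P * V) *ᵥ y) := by
    rw [← Matrix.mulVec_mulVec, ← Matrix.mulVec_mulVec, Matrix.dotProduct_mulVec y,
      Matrix.vecMul_transpose]
  rw [this, h]
  simp only [dotProduct, mulVec_diagonal]
  exact Finset.sum_congr rfl fun i _ => by ring

theorem core {n : ℕ} {P₁ P₂ R₁ R₂ V W : Matrix (Fin n) (Fin n) ℝ} {l m : Fin n → ℝ}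
    {r : Fin n → ℤ} (hV : IsUnit V.det)
    (hV1 : Vᵀ * P₁ * V = diagonal l) (hV2 : Vᵀ * P₂ * V = 1)
    (hW1 : Wᵀ * R₁ * W = diagonal m) (hW2 : Wᵀ * R₂ * W = 1)
    (hl : ∀ i j, r i ≤ r j → l j ≤ l i) (hm : ∀ i j, r i ≤ r j → m j ≤ m i) (c : ℝ)
    (H : ∀ x, x ⬝ᵥ (P₁ *ᵥ x) ≤ c * (x ⬝ᵥ (P₂ *ᵥ x)) → x ⬝ᵥ (R₁ *ᵥ x) ≤ c * (x ⬝ᵥ (R₂ *ᵥ x)))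
    (i : Fin n) (hi : l i ≤ c) : m i ≤ c := by
  by_contra! hlt
  let N : Matrix (Fin n) (Fin n) ℝ := Matrix.of fun j k =>
    if r j < r i then (V⁻¹ * W) j k else if j = i then 0 else (1 : Matrix (Fin n) (Fin n) ℝ) j k
  have hN : N.det = 0 := by
    apply det_eq_zero_of_row_eq_zero i
    intro j
    simp [N]
  obtain ⟨a, ha, hNa⟩ := Matrix.exists_mulVec_eq_zero_iff.2 hN
  set y := (V⁻¹ * W) *ᵥ a with hy
  have hy0 : ∀ j, r j < r i → y j = 0 := by
    intro j hj
    have := congrFun hNa j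
    simpa [N, Matrix.mulVec, dotProduct, hj, hy] using this
  have ha0 : ∀ j, r i < r j → a j = 0 := by
    intro j hj
    have := congrFun hNa j
    have hne : j ≠ i := by
      rintro rfl
      exact lt_irrefl _ hj
    simpa [N, Matrix.mulVec, dotProduct, hj.not_gt, hne, Matrix.one_apply] using this
  have hx : V *ᵥ y = W *ᵥ a := by
    rw [hy, Matrix.mulVec_mulVec, ← Matrix.mul_assoc, Matrix.mul_nonsing_inv _ hV, Matrix.one_mul]
  have e1 := quad_diag hV1 y
  have e2 := quad_diag (l := fun _ => 1) (hV2.trans diagonal_one.symm) y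
  have e3 := quad_diag hW1 a
  have e4 := quad_diag (l := fun _ => 1) (hW2.trans diagonal_one.symm) a
  have h1 := H (V *ᵥ y) (by
    rw [e1, e2, Finset.mul_sum]
    refine Finset.sum_le_sum fun j _ => ?_
    rcases lt_or_ge (r j) (r i) with h | h
    · simp [hy0 j h]
    · have := hl i j h
      nlinarith [sq_nonneg (y j)])
  rw [hx, e3, e4, Finset.mul_sum] at h1
  obtain ⟨k, hk⟩ := Function.ne_iff.1 ha
  have h2 : ∑ j, c * (1 * a j ^ 2) < ∑ j, m j * a j ^ 2 := by
    have key : ∀ j, a j ≠ 0 → c < m j := by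
      intro j hj
      have : r j ≤ r i := by
        by_contra! h
        exact hj (ha0 j h)
      exact hlt.trans_le (hm _ _ this)
    refine Finset.sum_lt_sum (fun j _ => ?_) ⟨k, Finset.mem_univ _, ?_⟩
    · by_cases h : a j = 0
      · simp [h]
      · nlinarith [key j h, sq_nonneg (a j)]
    · have hk' : a k ≠ 0 := hk
      have : 0 < a k ^ 2 := by positivity
      nlinarith [key k hk']
  linarith

theorem abs_log_le {l m : ℝ} (hl : 0 < l) (hm : 0 < m) (h1 : m ≤ max l 1) (h2 : min l 1 ≤ m) :
    Real.log m ^ 2 ≤ Real.log l ^ 2 := by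
  rcases le_total l 1 with h | h
  · rw [max_eq_right h] at h1
    rw [min_eq_left h] at h2
    have a := Real.log_le_log hl h2
    have b := Real.log_nonpos hm.le h1
    nlinarith
  · rw [max_eq_left h] at h1
    rw [min_eq_right h] at h2
    have a := Real.log_le_log hm h1
    have b := Real.log_nonneg h2
    nlinarith

theorem natDist_add {n : ℕ} {P₁ P₂ Q : Matrix (Fin n) (Fin n) ℝ} (h₁ : P₁.PosDef)
    (h₂ : P₂.PosDef) (hQ : Q.PosSemidef) : natDist (P₁ + Q) (P₂ + Q) ≤ natDist P₁ P₂ := by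
  obtain ⟨V, hV, hV1, hV2, lpos, lmono⟩ := pencil_diag h₁ h₂
  obtain ⟨W, hW, hW1, hW2, mpos, mmono⟩ :=
    pencil_diag (h₁.add_posSemidef hQ) (h₂.add_posSemidef hQ)
  have hq : ∀ x, 0 ≤ x ⬝ᵥ (Q *ᵥ x) := fun x => by
    simpa using hQ.dotProduct_mulVec_nonneg x
  unfold natDist
  refine Real.sqrt_le_sqrt (Finset.sum_le_sum fun i _ => ?_)
  refine abs_log_le (lpos i) (mpos i) ?_ ?_
  · refine core hV hV1 hV2 hW1 hW2 lmono mmono _ ?_ i (le_max_left _ _)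
    intro x hx
    rw [Matrix.add_mulVec, Matrix.add_mulVec, dotProduct_add, dotProduct_add]
    have := hq x
    nlinarith [le_max_right (matEigs ((matSqrt P₂)⁻¹ * P₁ * (matSqrt P₂)⁻¹) i) 1]
  · have := core (P₁ := -P₁) (R₁ := -(P₁ + Q)) (r := fun i => -eigRank i)
      (l := fun i => - matEigs ((matSqrt P₂)⁻¹ * P₁ * (matSqrt P₂)⁻¹) i)
      (m := fun i => - matEigs ((matSqrt (P₂ + Q))⁻¹ * (P₁ + Q) * (matSqrt (P₂ + Q))⁻¹) i)
      hV
      (by rw [Matrix.mul_neg, Matrix.neg_mul, hV1, diagonal_neg]) hV2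
      (by rw [Matrix.mul_neg, Matrix.neg_mul, hW1, diagonal_neg]) hW2
      (fun a b h => neg_le_neg (lmono b a (neg_le_neg_iff.1 h)))
      (fun a b h => neg_le_neg (mmono b a (neg_le_neg_iff.1 h)))
      (-min (matEigs ((matSqrt P₂)⁻¹ * P₁ * (matSqrt P₂)⁻¹) i) 1) ?_ i
      (neg_le_neg (min_le_left _ _))
    · exact neg_le_neg_iff.1 this
    intro x hx
    rw [Matrix.neg_mulVec, dotProduct_neg] at hx ⊢
    rw [Matrix.add_mulVec, Matrix.add_mulVec, dotProduct_add, dotProduct_add]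
    have := hq x
    nlinarith [min_le_right (matEigs ((matSqrt P₂)⁻¹ * P₁ * (matSqrt P₂)⁻¹) i) 1]

/-- The measurement-update map
`g(P) = ((A P Aᵀ + Q)⁻¹ + 𝓘)⁻¹` is nonexpansive for the natural
(Fisher / affine-invariant) distance. -/
theorem riccatiG_nonexpansive
    {n : ℕ} (A Q I : Matrix (Fin n) (Fin n) ℝ)
    (hA : IsUnit A.det) (hQ : Q.PosSemidef) (hI : I.PosSemidef)
    (P₁ P₂ : Matrix (Fin n) (Fin n) ℝ) (h₁ : P₁.PosDef) (h₂ : P₂.PosDef) :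
    natDist ((A * P₁ * Aᵀ + Q)⁻¹ + I)⁻¹ ((A * P₂ * Aᵀ + Q)⁻¹ + I)⁻¹
      ≤ natDist P₁ P₂ := by
  have a₁ := congr_posDef hA h₁
  have a₂ := congr_posDef hA h₂
  have b₁ := a₁.add_posSemidef hQ
  have b₂ := a₂.add_posSemidef hQ
  rw [natDist_inv (b₁.inv.add_posSemidef hI) (b₂.inv.add_posSemidef hI)]
  refine (natDist_add b₂.inv b₁.inv hI).trans ?_
  rw [natDist_inv b₂ b₁]
  refine (natDist_add a₁ a₂ hQ).trans ?_
  rw [natDist_congr hA h₁ h₂]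
end
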